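/- Let E and F be real Hilbert spaces, let c′ > 0, let A ⊆ E be an unbounded set with 0 ∈ A and μ(A) ≥ 1/c′, and let f : A → F be an ε-nearisometry for some ε ≥ 0 with f 0 = 0. Then there is a linear isometry U : E → F such that |P(f x) − U x| ≤ 2c′ε for all x ∈ A, where P : F → U(E) is the orthogonal projection onto the (closed) range of U. -/

import Mathlib

open Filter Metric Bornology RealInnerProductSpace

/-- `f` is an `ε`-nearisometry on `A`. -/
def IsNearisometryOn {E F : Type*} [NormedAddCommGroup E] [NormedAddCommGroup F]
    (f : E → F) (A : Set E) (ε : ℝ) : Prop :=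
  ∀ x ∈ A, ∀ y ∈ A, |‖f x - f y‖ - ‖x - y‖| ≤ ε

/-- `u` is a cluster direction of `A`. -/
def IsClusterDirection {E : Type*} [NormedAddCommGroup E] [NormedSpace ℝ E]
    (A : Set E) (u : E) : Prop :=
  ∃ x : ℕ → E, (∀ j, x j ∈ A) ∧ Tendsto (fun j => ‖x j‖) atTop atTop ∧
    Tendsto (fun j => ‖x j‖⁻¹ • x j) atTop (nhds u)

/-- `μ(A) = μ₁(cd A)`, where `μ₁(X) = inf_{|e|=1} sup {|u ⬝ e| : u ∈ X}` (with `sup ∅ = 0`,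
as is the convention for `Real.sSup`). -/
noncomputable def muDir {E : Type*} [NormedAddCommGroup E] [InnerProductSpace ℝ E]
    (A : Set E) : ℝ :=
  sInf {s | ∃ e : E, ‖e‖ = 1 ∧
    s = sSup {t | ∃ u, IsClusterDirection A u ∧ t = abs ⟪u, e⟫}}

/-- The orthogonal projection of `F` onto the (closed) range `U(E)` of a linear isometry
`U : E →ₗᵢ[ℝ] F` from a complete space, as a map `F → F`. -/
noncomputable def projOntoRange {E F : Type*} [NormedAddCommGroup E] [NormedSpace ℝ E]
    [CompleteSpace E] [NormedAddCommGroup F] [InnerProductSpace ℝ F]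
    (U : E →ₗᵢ[ℝ] F) (v : F) : F :=
  haveI : CompleteSpace (⊤ : Submodule ℝ E) :=
    completeSpace_coe_iff_isComplete.2 (by simpa using completeSpace_iff_isComplete_univ.1 ‹_›)
  haveI : CompleteSpace (Submodule.map U.toLinearMap ⊤) := U.completeSpace_map ⊤
  (Submodule.orthogonalProjectionOnto (Submodule.map U.toLinearMap ⊤) v : F)

/-
Along a sequence `z j` in `A` going to infinity in the direction `u`, the Busemann function
`‖z j - y‖ - ‖z j - x‖` tends to `⟪u, x - y⟫`. A nearisometry changes inner products on `A` by at
most a linear amount, so the rescaled images `‖z j‖⁻¹ • f (z j)` form a Cauchy sequence whose limit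
`w` depends isometrically on `u`; the correspondence `u ↦ w` extends to the required isometry `U`
since `0 < μ(A)` forces the cluster directions to span a dense subspace. As `f` changes each of the
two distances in the Busemann function by at most `ε`, comparing its limits in `E` and `F` gives
`|⟪U u, f x - f y⟫ - ⟪u, x - y⟫| ≤ 2 * ε` for every cluster direction `u`, and testing against these
`u` controls the norm up to the factor `1 / μ(A)`.
-/

section Extension

variable {𝕜 E F : Type*} [RCLike 𝕜] [NormedAddCommGroup E] [NormedAddCommGroup F]

lemma exists_linearIsometry_apply_eq_of_norm_eq [NormedSpace 𝕜 E] [NormedSpace 𝕜 F]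
    [CompleteSpace F] {M : Type*} [AddCommGroup M] [Module 𝕜 M] {e : M →ₗ[𝕜] E} {g : M →ₗ[𝕜] F}
    (he : DenseRange e) (h : ∀ m, ‖g m‖ = ‖e m‖) : ∃ U : E →ₗᵢ[𝕜] F, ∀ m, U (e m) = g m := by
  have hext := LinearMap.extendOfNorm_eq he (f := g) ⟨1, fun m => by rw [h, one_mul]⟩
  refine ⟨⟨(g.extendOfNorm e).toLinearMap, fun x => ?_⟩, hext⟩
  refine he.induction (P := fun x => ‖g.extendOfNorm e x‖ = ‖x‖) ?_
    (isClosed_eq (by fun_prop) (by fun_prop)) x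
  rintro _ ⟨m, rfl⟩
  rw [hext, h]

variable [InnerProductSpace 𝕜 E] [InnerProductSpace 𝕜 F] {ι : Type*} {c : ι → E} {φ : ι → F}

lemma norm_linearCombination_eq_of_inner_eq (h : ∀ i j, inner 𝕜 (φ i) (φ j) = inner 𝕜 (c i) (c j))
    (a : ι →₀ 𝕜) : ‖Finsupp.linearCombination 𝕜 φ a‖ = ‖Finsupp.linearCombination 𝕜 c a‖ := by
  simp only [norm_eq_sqrt_re_inner (𝕜 := 𝕜), Finsupp.linearCombination_apply, Finsupp.sum_inner,
    Finsupp.inner_sum, inner_smul_left, inner_smul_right, h]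

lemma exists_linearIsometry_apply_eq_of_inner_eq [CompleteSpace F]
    (hc : (Submodule.span 𝕜 (Set.range c)).topologicalClosure = ⊤)
    (h : ∀ i j, inner 𝕜 (φ i) (φ j) = inner 𝕜 (c i) (c j)) :
    ∃ U : E →ₗᵢ[𝕜] F, ∀ i, U (c i) = φ i := by
  have hdense : DenseRange (Finsupp.linearCombination 𝕜 c) := by
    rwa [← Finsupp.range_linearCombination, ← Submodule.dense_iff_topologicalClosure_eq_top,
      LinearMap.coe_range] at hc
  obtain ⟨U, hU⟩ :=
    exists_linearIsometry_apply_eq_of_norm_eq hdense (norm_linearCombination_eq_of_inner_eq h)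
  exact ⟨U, fun i => by simpa using hU (Finsupp.single i 1)⟩

end Extension

section Limits

open Topology

variable {E ι : Type*} [NormedAddCommGroup E] {l : Filter ι}

lemma cauchy_map_of_tendsto_inner {𝕜 : Type*} [RCLike 𝕜] [InnerProductSpace 𝕜 E] [NeBot l]
    {g : ι → E} {c : 𝕜} (h : Tendsto (fun p : ι × ι => inner 𝕜 (g p.1) (g p.2)) (l ×ˢ l) (𝓝 c)) :
    Cauchy (map g l) := by
  have hre := (RCLike.continuous_re.tendsto c).comp h
  have hdiag : Tendsto (fun i => ‖g i‖ ^ 2) l (𝓝 (RCLike.re c)) := by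
    simpa only [norm_sq_eq_re_inner (𝕜 := 𝕜)] using! hre.comp (tendsto_id.prodMk tendsto_id)
  have hsq : Tendsto (fun p : ι × ι => ‖g p.1 - g p.2‖ ^ 2) (l ×ˢ l) (𝓝 0) := by
    have := ((hdiag.comp tendsto_fst).sub (hre.const_mul 2)).add (hdiag.comp tendsto_snd)
    rw [show RCLike.re c - 2 * RCLike.re c + RCLike.re c = 0 by ring] at this
    exact this.congr fun p => (norm_sub_sq (𝕜 := 𝕜) _ _).symm
  rw [cauchy_map_iff', Metric.uniformity_eq_comap_nhds_zero, tendsto_comap_iff]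
  simpa only [Function.comp_def, dist_eq_norm, Real.sqrt_sq (norm_nonneg _), Real.sqrt_zero]
    using hsq.sqrt

lemma tendsto_norm_sub_sub_norm_sub [InnerProductSpace ℝ E] {z : ι → E} {t : ι → ℝ} {u : E}
    (ht : Tendsto t l (𝓝[>] 0)) (hu : Tendsto (fun i => t i • z i) l (𝓝 u)) (hu0 : u ≠ 0)
    (x y : E) :
    Tendsto (fun i => ‖z i - y‖ - ‖z i - x‖) l (𝓝 (⟪u, x - y⟫ / ‖u‖)) := by
  have ht0 : Tendsto t l (𝓝 0) := ht.mono_right nhdsWithin_le_nhds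
  have hsub (v : E) : Tendsto (fun i => t i • (z i - v)) l (𝓝 u) := by
    simpa [smul_sub] using hu.sub (ht0.smul_const v)
  have hsum : Tendsto (fun i => t i * (‖z i - y‖ + ‖z i - x‖)) l (𝓝 (2 * ‖u‖)) := by
    rw [two_mul]
    refine ((hsub y).norm.add (hsub x).norm).congr' ?_
    filter_upwards [ht.eventually self_mem_nhdsWithin] with i hi
    rw [norm_smul, norm_smul, Real.norm_of_nonneg (Set.mem_Ioi.1 hi).le, mul_add]
  have hdiffSq : Tendsto (fun i => t i * (‖z i - y‖ ^ 2 - ‖z i - x‖ ^ 2)) l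
      (𝓝 (2 * ⟪u, x - y⟫)) := by
    have := ((hu.inner (tendsto_const_nhds (x := x - y))).const_mul 2).add
      (ht0.mul_const (‖y‖ ^ 2 - ‖x‖ ^ 2))
    rw [zero_mul, add_zero] at this
    refine this.congr fun i => ?_
    rw [norm_sub_sq_real, norm_sub_sq_real, real_inner_smul_left, inner_sub_right]
    ring
  have hpos : 0 < 2 * ‖u‖ := by positivity
  rw [← mul_div_mul_left _ _ (two_ne_zero' ℝ)]
  refine (hdiffSq.div hsum hpos.ne').congr' ?_
  filter_upwards [hsum.eventually_ne hpos.ne'] with i hi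
  rw [Pi.div_apply, div_eq_iff hi]
  ring

end Limits

section Nearisometry

open Topology

variable {E F : Type*} [NormedAddCommGroup E] [NormedAddCommGroup F] {f : E → F} {A : Set E} {ε : ℝ}

lemma IsNearisometryOn.exists_abs_norm_sub_norm_le (hf : IsNearisometryOn f A ε) :
    ∃ C, ε ≤ C ∧ ∀ x ∈ A, |‖f x‖ - ‖x‖| ≤ C := by
  obtain rfl | ⟨a, ha⟩ := A.eq_empty_or_nonempty
  · exact ⟨ε, le_rfl, by simp⟩
  refine ⟨‖f a‖ + ε + ‖a‖, by linarith [norm_nonneg (f a), norm_nonneg a], fun x hx => ?_⟩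
  have hfa := abs_norm_sub_norm_le (f x) (f x - f a)
  have hxa := abs_norm_sub_norm_le (x - a) x
  rw [sub_sub_cancel] at hfa
  rw [sub_sub_cancel_left, norm_neg] at hxa
  calc |‖f x‖ - ‖x‖|
      = |(‖f x‖ - ‖f x - f a‖) + (‖f x - f a‖ - ‖x - a‖) + (‖x - a‖ - ‖x‖)| := by ring_nf
    _ ≤ ‖f a‖ + ε + ‖a‖ := (abs_add_three _ _ _).trans (by gcongr; exact hf x hx a ha)

lemma IsClusterDirection.norm_eq_one [NormedSpace ℝ E] {u : E} (hu : IsClusterDirection A u) :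
    ‖u‖ = 1 := by
  obtain ⟨z, -, hz, hzu⟩ := hu
  refine tendsto_nhds_unique hzu.norm (tendsto_const_nhds.congr' ?_)
  filter_upwards [hz.eventually_ne_atTop 0] with j hj
  rw [norm_smul, norm_inv, norm_norm, inv_mul_cancel₀ hj]

variable [InnerProductSpace ℝ E] [InnerProductSpace ℝ F]

lemma abs_inner_sub_inner_le_of_norm_close {x y : E} {x' y' : F} {C : ℝ}
    (hx : |‖x'‖ - ‖x‖| ≤ C) (hy : |‖y'‖ - ‖y‖| ≤ C) (hxy : |‖x' - y'‖ - ‖x - y‖| ≤ C) :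
    |⟪x', y'⟫ - ⟪x, y⟫| ≤ 2 * C * (‖x‖ + ‖y‖ + C) := by
  have hC : 0 ≤ C := (abs_nonneg _).trans hx
  have sq_close {a b : ℝ} (hb : 0 ≤ b) (hab : |a - b| ≤ C) :
      |a ^ 2 - b ^ 2| ≤ C * (2 * b + C) := by
    rw [show a ^ 2 - b ^ 2 = (a - b) * (2 * b + (a - b)) by ring, abs_mul]
    gcongr
    refine (abs_add_le _ _).trans ?_
    rw [abs_of_nonneg (by positivity)]
    gcongr
  have hx2 := sq_close (norm_nonneg x) hx
  have hy2 := sq_close (norm_nonneg y) hy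
  have hxy2 := sq_close (norm_nonneg (x - y)) hxy
  have htri := mul_le_mul_of_nonneg_left (norm_sub_le x y) hC
  have hpolar' := norm_sub_sq_real x' y'
  have hpolar := norm_sub_sq_real x y
  rw [abs_le] at hx2 hy2 hxy2 ⊢
  constructor <;> linarith [mul_nonneg hC hC]

variable {ι : Type*} {l : Filter ι}

lemma IsNearisometryOn.tendsto_inner (hf : IsNearisometryOn f A ε) {x y : ι → E}
    (hx : ∀ i, x i ∈ A) (hy : ∀ i, y i ∈ A) {s t : ι → ℝ} (hs : Tendsto s l (𝓝 0))
    (ht : Tendsto t l (𝓝 0)) {u v : E} (hu : Tendsto (fun i => s i • x i) l (𝓝 u))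
    (hv : Tendsto (fun i => t i • y i) l (𝓝 v)) :
    Tendsto (fun i => ⟪s i • f (x i), t i • f (y i)⟫) l (𝓝 ⟪u, v⟫) := by
  obtain ⟨C, hεC, hC⟩ := hf.exists_abs_norm_sub_norm_le
  have hbound : Tendsto (fun i => 2 * C * (‖t i‖ * ‖s i • x i‖ + ‖s i‖ * ‖t i • y i‖ +
      ‖s i‖ * ‖t i‖ * C)) l (𝓝 0) := by
    simpa using (((ht.norm.mul hu.norm).add (hs.norm.mul hv.norm)).add
      ((hs.norm.mul ht.norm).mul_const C)).const_mul (2 * C)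
  have herror : Tendsto (fun i => ⟪s i • f (x i), t i • f (y i)⟫ - ⟪s i • x i, t i • y i⟫) l
      (𝓝 0) := by
    refine squeeze_zero_norm (fun i => ?_) hbound
    have hinner := abs_inner_sub_inner_le_of_norm_close (hC _ (hx i)) (hC _ (hy i))
      ((hf _ (hx i) _ (hy i)).trans hεC)
    calc ‖⟪s i • f (x i), t i • f (y i)⟫ - ⟪s i • x i, t i • y i⟫‖
        = ‖s i‖ * ‖t i‖ * |⟪f (x i), f (y i)⟫ - ⟪x i, y i⟫| := by
          simp only [real_inner_smul_left, real_inner_smul_right, ← mul_sub, norm_mul,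
            Real.norm_eq_abs]
          ring
      _ ≤ ‖s i‖ * ‖t i‖ * (2 * C * (‖x i‖ + ‖y i‖ + C)) := by gcongr
      _ = _ := by rw [norm_smul, norm_smul]; ring
  simpa using herror.add (hu.inner hv)

lemma IsNearisometryOn.exists_tendsto_smul [CompleteSpace F] [NeBot l]
    (hf : IsNearisometryOn f A ε) {z : ι → E} (hz : ∀ i, z i ∈ A) {t : ι → ℝ}
    (ht : Tendsto t l (𝓝 0)) {u : E} (hu : Tendsto (fun i => t i • z i) l (𝓝 u)) :
    ∃ w, Tendsto (fun i => t i • f (z i)) l (𝓝 w) :=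
  cauchy_map_iff_exists_tendsto.1 <| cauchy_map_of_tendsto_inner <|
    hf.tendsto_inner (fun p : ι × ι => hz p.1) (fun p => hz p.2) (ht.comp tendsto_fst)
      (ht.comp tendsto_snd) (hu.comp tendsto_fst) (hu.comp tendsto_snd)

lemma IsNearisometryOn.abs_inner_sub_inner_le [NeBot l] (hf : IsNearisometryOn f A ε)
    {z : ι → E} (hz : ∀ i, z i ∈ A) {t : ι → ℝ} (ht : Tendsto t l (𝓝[>] 0)) {u : E} {w : F}
    (hu : Tendsto (fun i => t i • z i) l (𝓝 u)) (hw : Tendsto (fun i => t i • f (z i)) l (𝓝 w))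
    (hu1 : ‖u‖ = 1) (hw1 : ‖w‖ = 1) {x y : E} (hx : x ∈ A) (hy : y ∈ A) :
    |⟪w, f x - f y⟫ - ⟪u, x - y⟫| ≤ 2 * ε := by
  have hE := tendsto_norm_sub_sub_norm_sub ht hu (norm_ne_zero_iff.1 (by simp [hu1])) x y
  have hF := tendsto_norm_sub_sub_norm_sub ht hw (norm_ne_zero_iff.1 (by simp [hw1])) (f x) (f y)
  rw [hu1, div_one] at hE
  rw [hw1, div_one] at hF
  refine le_of_tendsto (hF.sub hE).abs (.of_forall fun i => ?_)
  rw [sub_sub_sub_comm, two_mul]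
  exact (abs_sub _ _).trans (add_le_add (hf _ (hz i) y hy) (hf _ (hz i) x hx))

end Nearisometry

section ImageDirection

variable {E F : Type*} [NormedAddCommGroup E] [NormedAddCommGroup F] {f : E → F} {A : Set E} {ε : ℝ}

/-- `w` is the direction in which `f` sends some sequence of `A` that goes to infinity in the
direction `u`. The images are rescaled by `‖x j‖⁻¹` rather than normalized, which gives the same
limit for a nearisometry. -/
def IsImageDirection [NormedSpace ℝ E] [NormedSpace ℝ F] (f : E → F) (A : Set E) (u : E) (w : F) :
    Prop :=
  ∃ x : ℕ → E, (∀ j, x j ∈ A) ∧ Tendsto (fun j => ‖x j‖) atTop atTop ∧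
    Tendsto (fun j => ‖x j‖⁻¹ • x j) atTop (nhds u) ∧
    Tendsto (fun j => ‖x j‖⁻¹ • f (x j)) atTop (nhds w)

lemma IsImageDirection.isClusterDirection [NormedSpace ℝ E] [NormedSpace ℝ F] {u : E} {w : F}
    (h : IsImageDirection f A u w) : IsClusterDirection A u :=
  let ⟨x, hxA, hx, hu, _⟩ := h
  ⟨x, hxA, hx, hu⟩

variable [InnerProductSpace ℝ E] [InnerProductSpace ℝ F]

lemma IsClusterDirection.exists_isImageDirection [CompleteSpace F] {u : E}
    (hu : IsClusterDirection A u) (hf : IsNearisometryOn f A ε) :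
    ∃ w, IsImageDirection f A u w :=
  let ⟨x, hxA, hx, hxu⟩ := hu
  let ⟨w, hw⟩ := hf.exists_tendsto_smul hxA hx.inv_tendsto_atTop hxu
  ⟨w, x, hxA, hx, hxu, hw⟩

lemma IsImageDirection.inner_eq {u v : E} {w w' : F} (h : IsImageDirection f A u w)
    (h' : IsImageDirection f A v w') (hf : IsNearisometryOn f A ε) : ⟪w, w'⟫ = ⟪u, v⟫ := by
  obtain ⟨x, hxA, hx, hu, hw⟩ := h
  obtain ⟨y, hyA, hy, hv, hw'⟩ := h'
  exact tendsto_nhds_unique (hw.inner hw') <|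
    hf.tendsto_inner hxA hyA hx.inv_tendsto_atTop hy.inv_tendsto_atTop hu hv

lemma IsImageDirection.abs_inner_sub_inner_le {u : E} {w : F} (h : IsImageDirection f A u w)
    (hf : IsNearisometryOn f A ε) {x y : E} (hx : x ∈ A) (hy : y ∈ A) :
    |⟪w, f x - f y⟫ - ⟪u, x - y⟫| ≤ 2 * ε := by
  have hu1 : ‖u‖ = 1 := h.isClusterDirection.norm_eq_one
  have hw1 : ‖w‖ = 1 := by
    rw [norm_eq_sqrt_real_inner, h.inner_eq h hf, ← norm_eq_sqrt_real_inner, hu1]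
  obtain ⟨z, hzA, hz, hu, hw⟩ := h
  exact hf.abs_inner_sub_inner_le hzA (tendsto_inv_atTop_nhdsGT_zero.comp hz) hu hw hu1 hw1 hx hy

end ImageDirection

section MuDir

variable {E : Type*} [NormedAddCommGroup E] [InnerProductSpace ℝ E] {A : Set E}

lemma muDir_le_sSup_abs_inner (A : Set E) {e : E} (he : ‖e‖ = 1) :
    muDir A ≤ sSup {t | ∃ u, IsClusterDirection A u ∧ t = |⟪u, e⟫|} := by
  refine csInf_le ⟨0, ?_⟩ ⟨e, he, rfl⟩
  rintro _ ⟨e, -, rfl⟩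
  refine Real.sSup_nonneg ?_
  rintro _ ⟨u, -, rfl⟩
  exact abs_nonneg _

lemma muDir_mul_norm_le {z : E} {r : ℝ} (hr : 0 ≤ r)
    (h : ∀ u, IsClusterDirection A u → |⟪u, z⟫| ≤ r) : muDir A * ‖z‖ ≤ r := by
  obtain rfl | hz := eq_or_ne z 0
  · simpa using hr
  rw [← le_div_iff₀ (norm_pos_iff.2 hz)]
  refine (muDir_le_sSup_abs_inner A (norm_smul_inv_norm (𝕜 := ℝ) hz)).trans
    (Real.sSup_le ?_ (by positivity))
  rintro _ ⟨u, hu, rfl⟩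
  rw [real_inner_smul_right, abs_mul, RCLike.ofReal_real_eq_id, id, abs_inv, abs_norm,
    inv_mul_eq_div]
  gcongr
  exact h u hu

lemma topologicalClosure_span_clusterDirection_eq_top [CompleteSpace E] (hA : 0 < muDir A) :
    (Submodule.span ℝ {u | IsClusterDirection A u}).topologicalClosure = ⊤ := by
  rw [Submodule.topologicalClosure_eq_top_iff, Submodule.eq_bot_iff]
  intro e he
  have hle : muDir A * ‖e‖ ≤ 0 := muDir_mul_norm_le le_rfl fun u hu => by
    rw [(Submodule.mem_orthogonal _ _).1 he u (Submodule.subset_span hu), abs_zero]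
  exact norm_le_zero_iff.1 (nonpos_of_mul_nonpos_right hle hA)

end MuDir

section Approximation

variable {E F : Type*} [NormedAddCommGroup E] [InnerProductSpace ℝ E] [CompleteSpace E]
  [NormedAddCommGroup F] [InnerProductSpace ℝ F] [CompleteSpace F]
  {f : E → F} {A : Set E} {ε : ℝ}

lemma projOntoRange_eq_apply_adjoint (U : E →ₗᵢ[ℝ] F) (v : F) :
    projOntoRange U v = U (U.toContinuousLinearMap.adjoint v) := by
  have : CompleteSpace (⊤ : Submodule ℝ E) := isClosed_univ.completeSpace_coe
  have : CompleteSpace (Submodule.map U.toLinearMap ⊤) := U.completeSpace_map ⊤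
  refine Submodule.eq_starProjection_of_mem_of_inner_eq_zero ⟨_, trivial, rfl⟩ ?_
  rintro _ ⟨x, -, rfl⟩
  change ⟪v - U (U.toContinuousLinearMap.adjoint v), U x⟫ = 0
  rw [inner_sub_left, U.inner_map_map, ContinuousLinearMap.adjoint_inner_left,
    LinearIsometry.coe_toContinuousLinearMap, sub_self]

lemma muDir_mul_norm_projOntoRange_sub_le {U : E →ₗᵢ[ℝ] F} {v : F} {x : E} {r : ℝ} (hr : 0 ≤ r)
    (h : ∀ u, IsClusterDirection A u → |⟪U u, v⟫ - ⟪u, x⟫| ≤ r) :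
    muDir A * ‖projOntoRange U v - U x‖ ≤ r := by
  rw [projOntoRange_eq_apply_adjoint, ← map_sub, U.norm_map]
  refine muDir_mul_norm_le hr fun u hu => ?_
  rw [inner_sub_right, ContinuousLinearMap.adjoint_inner_right]
  exact h u hu

lemma IsNearisometryOn.exists_linearIsometry_isImageDirection (hf : IsNearisometryOn f A ε)
    (hA : 0 < muDir A) :
    ∃ U : E →ₗᵢ[ℝ] F, ∀ u, IsClusterDirection A u → IsImageDirection f A u (U u) := by
  choose φ hφ using fun u : {u // IsClusterDirection A u} => u.2.exists_isImageDirection hf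
  obtain ⟨U, hU⟩ := exists_linearIsometry_apply_eq_of_inner_eq (𝕜 := ℝ) (c := Subtype.val) (φ := φ)
    (by simpa using topologicalClosure_span_clusterDirection_eq_top hA)
    (fun u v => (hφ u).inner_eq (hφ v) hf)
  exact ⟨U, fun u hu => hU ⟨u, hu⟩ ▸ hφ ⟨u, hu⟩⟩

theorem exists_linearIsometry_approx_general {c' : ℝ} (hc' : 0 < c') (hmu : 1 / c' ≤ muDir A)
    (hf : IsNearisometryOn f A ε) :
    ∃ U : E →ₗᵢ[ℝ] F, ∀ x ∈ A, ∀ y ∈ A,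
      ‖projOntoRange U (f x - f y) - U (x - y)‖ ≤ 2 * c' * ε := by
  obtain ⟨U, hU⟩ := hf.exists_linearIsometry_isImageDirection ((one_div_pos.2 hc').trans_le hmu)
  refine ⟨U, fun x hx y hy => ?_⟩
  have hε : 0 ≤ ε := (abs_nonneg _).trans (hf x hx y hy)
  have hle : 1 / c' * ‖projOntoRange U (f x - f y) - U (x - y)‖ ≤ 2 * ε :=
    (mul_le_mul_of_nonneg_right hmu (norm_nonneg _)).trans <|
      muDir_mul_norm_projOntoRange_sub_le (by positivity) fun u hu =>
        (hU u hu).abs_inner_sub_inner_le hf hx hy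
  rw [one_div, inv_mul_le_iff₀ hc'] at hle
  exact hle.trans_eq (by ring)

end Approximation

/-- Theorem 4.7: if `A ⊆ E` is unbounded with `0 ∈ A` and `μ(A) ≥ 1/c'`, and `f : A → F`
is an `ε`-nearisometry with `f 0 = 0`, then there is a linear isometry `U : E → F` with
`|P (f x) - U x| ≤ 2 c' ε` for all `x ∈ A`, where `P` is the orthogonal projection of `F`
onto `U(E)`. -/
theorem exists_linearIsometry_approx {E F : Type*}
    [NormedAddCommGroup E] [InnerProductSpace ℝ E] [CompleteSpace E]
    [NormedAddCommGroup F] [InnerProductSpace ℝ F] [CompleteSpace F]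
    (c' : ℝ) (hc' : 0 < c') (A : Set E) (hA : ¬ IsBounded A) (h0A : (0 : E) ∈ A)
    (hmu : 1 / c' ≤ muDir A)
    (f : E → F) (ε : ℝ) (hε : 0 ≤ ε) (hf : IsNearisometryOn f A ε) (hf0 : f 0 = 0) :
    ∃ U : E →ₗᵢ[ℝ] F, ∀ x ∈ A, ‖projOntoRange U (f x) - U x‖ ≤ 2 * c' * ε := by
  obtain ⟨U, hU⟩ := exists_linearIsometry_approx_general hc' hmu hf
  exact ⟨U, fun x hx => by simpa only [hf0, sub_zero] using hU x hx 0 h0A⟩
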